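/- Let H be a finite-dimensional Hopf algebra and A a partial H-module algebra. Every H-prime ideal 𝔭 of A is of the form (𝒫:H) for some prime ideal 𝒫 of A. -/

import Mathlib

open TensorProduct

noncomputable section

variable (k : Type*) [Field k]

/-- The "Sweedler sum" `h ↦ Σ f(h₁) * g(h₂)`. -/
def sweedler {H A : Type*} [Ring H] [HopfAlgebra k H]
    [Ring A] [Algebra k A] (f g : H →ₗ[k] A) : H →ₗ[k] A :=
  (LinearMap.mul' k A) ∘ₗ (TensorProduct.map f g) ∘ₗ Coalgebra.comul

/-- A (left) partial `H`-module algebra structure on a unital algebra `A`: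
`1_H · a = a`, `h · (ab) = Σ (h₁·a)(h₂·b)` and `h·(g·b) = Σ (h₁·1)((h₂ g)·b)`. -/
structure PartialModuleAlgebra (H A : Type*) [Ring H] [HopfAlgebra k H]
    [Ring A] [Algebra k A] where
  act : H →ₗ[k] A →ₗ[k] A
  one_act : ∀ a : A, act 1 a = a
  act_mul : ∀ (h : H) (a b : A),
    act h (a * b) = sweedler k (act.flip a) (act.flip b) h
  act_act : ∀ (h g : H) (b : A),
    act h (act g b) =
      sweedler k (act.flip 1) ((act.flip b) ∘ₗ LinearMap.mulRight k g) h

variable {H A : Type*} [Ring H] [HopfAlgebra k H] [Ring A] [Algebra k A]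

/-- A (two-sided) ideal of `A`, encoded as a `k`-submodule closed under multiplication
by elements of `A` on both sides. -/
def IsIdeal (I : Submodule k A) : Prop :=
  ∀ a ∈ I, ∀ b : A, a * b ∈ I ∧ b * a ∈ I

/-- An `H`-stable subspace: `H · I ⊆ I`. -/
def Hstable (ξ : PartialModuleAlgebra k H A) (I : Submodule k A) : Prop :=
  ∀ (h : H), ∀ x ∈ I, ξ.act h x ∈ I

/-- `(I : H) = {x ∈ I | h · x ∈ I for all h ∈ H}`. -/
def colonH (ξ : PartialModuleAlgebra k H A) (I : Submodule k A) : Submodule k A :=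
  I ⊓ ⨅ h : H, Submodule.comap (ξ.act h) I

/-- The product of two ideals of `A`. -/
def idealProd (I J : Submodule k A) : Submodule k A :=
  Submodule.span k {z | ∃ a ∈ I, ∃ b ∈ J, z = a * b}

/-- An `H`-prime ideal: a proper `H`-stable ideal `𝔭` such that for all `H`-stable ideals
`I, J`, `IJ ⊆ 𝔭` implies `I ⊆ 𝔭` or `J ⊆ 𝔭`. -/
def IsHPrime (ξ : PartialModuleAlgebra k H A) (p : Submodule k A) : Prop :=
  IsIdeal k p ∧ Hstable k ξ p ∧ p ≠ ⊤ ∧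
    ∀ I J : Submodule k A, IsIdeal k I → Hstable k ξ I → IsIdeal k J → Hstable k ξ J →
      idealProd k I J ≤ p → I ≤ p ∨ J ≤ p

/-- An `H`-semiprime ideal: a proper `H`-stable ideal `𝔰` such that `I² ⊆ 𝔰` implies
`I ⊆ 𝔰` for every `H`-stable ideal `I`. -/
def IsHSemiprime (ξ : PartialModuleAlgebra k H A) (s : Submodule k A) : Prop :=
  IsIdeal k s ∧ Hstable k ξ s ∧ s ≠ ⊤ ∧
    ∀ I : Submodule k A, IsIdeal k I → Hstable k ξ I → idealProd k I I ≤ s → I ≤ s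

/-- The subspace `A(H·x)A(H·y)`, spanned by the products `a (h·x) b (g·y)`. -/
def spanAxAy (ξ : PartialModuleAlgebra k H A) (x y : A) : Submodule k A :=
  Submodule.span k {w | ∃ (a : A) (h : H) (b : A) (g : H), w = a * ξ.act h x * b * ξ.act g y}

/-- An `Hm`-system: a nonempty `M ⊆ A` such that `A(H·x)A(H·y) ∩ M ≠ ∅` for `x, y ∈ M`. -/
def HmSystem (ξ : PartialModuleAlgebra k H A) (M : Set A) : Prop :=
  M.Nonempty ∧ ∀ x ∈ M, ∀ y ∈ M, ∃ z ∈ M, z ∈ spanAxAy k ξ x y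

/-- An `Hn`-system: a nonempty `N ⊆ A` such that `A(H·x)A(H·x) ∩ N ≠ ∅` for `x ∈ N`. -/
def HnSystem (ξ : PartialModuleAlgebra k H A) (N : Set A) : Prop :=
  N.Nonempty ∧ ∀ x ∈ N, ∃ z ∈ N, z ∈ spanAxAy k ξ x x

/-- The `H`-radical `√_H(I)` of an `H`-stable ideal `I`:
`{x | every Hm-system containing x meets I}`. -/
def Hradical (ξ : PartialModuleAlgebra k H A) (I : Submodule k A) : Set A :=
  {x : A | ∀ M : Set A, HmSystem k ξ M → x ∈ M → (M ∩ (I : Set A)).Nonempty}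

/-- A prime ideal of `A` (in the two-sided, ideal-theoretic sense). -/
def IsPrimeIdeal (P : Submodule k A) : Prop :=
  IsIdeal k P ∧ P ≠ ⊤ ∧
    ∀ I J : Submodule k A, IsIdeal k I → IsIdeal k J → idealProd k I J ≤ P → I ≤ P ∨ J ≤ P

/-!
Choose an ideal `P ⊇ p` maximal among the ideals `I` with `(I : H) ⊆ p`. Such a `P` exists by Zorn's
lemma: when `H · x` is finite-dimensional, a directed union of ideals containing it has a member
that already does. Since `(I : H)(J : H) ⊆ (IJ : H)`, the `H`-primality of `p` makes `P` prime: if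
`IJ ⊆ P`, then `(I + P : H)(J + P : H) ⊆ (P : H) ⊆ p`, so one factor lies in `p`, and maximality
puts `I` or `J` inside `P`. Finally `p ⊆ (P : H)` because `p` is `H`-stable.
-/

section

variable {k}

theorem idealProd_eq_mul (I J : Submodule k A) : idealProd k I J = I * J := by
  refine le_antisymm (Submodule.span_le.2 ?_)
    (Submodule.mul_le.2 fun a ha b hb => Submodule.subset_span ⟨a, ha, b, hb, rfl⟩)
  rintro _ ⟨a, ha, b, hb, rfl⟩
  exact Submodule.mul_mem_mul ha hb

theorem isIdeal_iff_mul_top_le {I : Submodule k A} : IsIdeal k I ↔ I * ⊤ ≤ I ∧ ⊤ * I ≤ I := by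
  simp only [Submodule.mul_le, IsIdeal, Submodule.mem_top, true_imp_iff]
  exact ⟨fun h => ⟨fun a ha b => (h a ha b).1, fun b a ha => (h a ha b).2⟩,
    fun h a ha b => ⟨h.1 a ha b, h.2 b a ha⟩⟩

theorem isIdeal_sSup {c : Set (Submodule k A)} (hc : ∀ I ∈ c, IsIdeal k I) :
    IsIdeal k (sSup c) := by
  intro a ha b
  have hright : sSup c ≤ (sSup c).comap (LinearMap.mulRight k b) :=
    sSup_le fun I hI x hx => Submodule.mem_sSup_of_mem hI (hc I hI x hx b).1
  have hleft : sSup c ≤ (sSup c).comap (LinearMap.mulLeft k b) :=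
    sSup_le fun I hI x hx => Submodule.mem_sSup_of_mem hI (hc I hI x hx b).2
  exact ⟨hright ha, hleft ha⟩

namespace IsIdeal

variable {I J P : Submodule k A}

theorem sup (hI : IsIdeal k I) (hJ : IsIdeal k J) : IsIdeal k (I ⊔ J) := by
  rw [← sSup_pair]
  exact isIdeal_sSup (by rintro _ (rfl | rfl) <;> assumption)

theorem mul_le_right (hI : IsIdeal k I) (J : Submodule k A) : I * J ≤ I :=
  (mul_le_mul' le_rfl le_top).trans (isIdeal_iff_mul_top_le.1 hI).1

theorem mul_le_left (hJ : IsIdeal k J) (I : Submodule k A) : I * J ≤ J :=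
  (mul_le_mul' le_top le_rfl).trans (isIdeal_iff_mul_top_le.1 hJ).2

theorem sup_mul_sup_le (hP : IsIdeal k P) (hIJ : I * J ≤ P) : (I ⊔ P) * (J ⊔ P) ≤ P := by
  rw [Submodule.sup_mul, Submodule.mul_sup]
  exact sup_le (sup_le hIJ (hP.mul_le_left I)) (hP.mul_le_right _)

end IsIdeal

theorem sweedler_mem_mul {M N : Submodule k A} {f g : H →ₗ[k] A}
    (hf : ∀ h, f h ∈ M) (hg : ∀ h, g h ∈ N) (h : H) : sweedler k f g h ∈ M * N := by
  change LinearMap.mul' k A (TensorProduct.map f g (Coalgebra.comul h)) ∈ M * N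
  induction Coalgebra.comul (R := k) h using TensorProduct.induction_on with
  | zero => simp only [map_zero, Submodule.zero_mem]
  | tmul x y => exact Submodule.mul_mem_mul (hf x) (hg y)
  | add s t hs ht => simpa only [map_add] using Submodule.add_mem _ hs ht

variable {ξ : PartialModuleAlgebra k H A} {I J : Submodule k A}

theorem mem_colonH {x : A} : x ∈ colonH k ξ I ↔ ∀ h, ξ.act h x ∈ I := by
  simp only [colonH, Submodule.mem_inf, Submodule.mem_iInf, Submodule.mem_comap,
    and_iff_right_iff_imp]
  intro hx
  simpa only [ξ.one_act] using hx 1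

theorem mem_colonH_iff_range_le {x : A} :
    x ∈ colonH k ξ I ↔ LinearMap.range (ξ.act.flip x) ≤ I := by
  rw [mem_colonH, LinearMap.range_le_iff_comap, Submodule.eq_top_iff']
  rfl

theorem colonH_mono (hIJ : I ≤ J) : colonH k ξ I ≤ colonH k ξ J :=
  fun _ hx => mem_colonH.2 fun h => hIJ (mem_colonH.1 hx h)

theorem colonH_top : colonH k ξ ⊤ = ⊤ :=
  top_le_iff.1 fun _ _ => mem_colonH.2 fun _ => Submodule.mem_top

theorem colonH_mul_colonH_le : colonH k ξ I * colonH k ξ J ≤ colonH k ξ (I * J) := by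
  refine Submodule.mul_le.2 fun a ha b hb => mem_colonH.2 fun h => ?_
  rw [ξ.act_mul]
  exact sweedler_mem_mul (mem_colonH.1 ha) (mem_colonH.1 hb) h

theorem isIdeal_colonH (hI : IsIdeal k I) : IsIdeal k (colonH k ξ I) := by
  obtain ⟨hright, hleft⟩ := isIdeal_iff_mul_top_le.1 hI
  rw [isIdeal_iff_mul_top_le, ← colonH_top (ξ := ξ)]
  exact ⟨colonH_mul_colonH_le.trans (colonH_mono hright),
    colonH_mul_colonH_le.trans (colonH_mono hleft)⟩

theorem hstable_colonH (hI : ⊤ * I ≤ I) : Hstable k ξ (colonH k ξ I) := by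
  refine fun g x hx => mem_colonH.2 fun h => hI ?_
  rw [ξ.act_act]
  exact sweedler_mem_mul (fun _ => Submodule.mem_top) (fun h' => mem_colonH.1 hx (h' * g)) h

theorem Hstable.le_colonH (hI : Hstable k ξ I) (hIJ : I ≤ J) : I ≤ colonH k ξ J :=
  fun x hx => mem_colonH.2 fun h => hIJ (hI h x hx)

theorem mem_colonH_sSup_of_directedOn {c : Set (Submodule k A)} (hne : c.Nonempty)
    (hc : DirectedOn (· ≤ ·) c) {x : A} (hx : (LinearMap.range (ξ.act.flip x)).FG) :
    x ∈ colonH k ξ (sSup c) ↔ ∃ I ∈ c, x ∈ colonH k ξ I := by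
  refine ⟨fun hxc => ?_, fun ⟨I, hI, hxI⟩ => colonH_mono (le_sSup hI) hxI⟩
  simp only [mem_colonH_iff_range_le] at hxc ⊢
  exact (CompleteLattice.isCompactElement_iff_le_of_directed_sSup_le _ _).1
    ((Submodule.fg_iff_compact _).1 hx) c hne hc hxc

theorem exists_le_maximal_isIdeal_colonH_le
    (hξ : ∀ x, (LinearMap.range (ξ.act.flip x)).FG) {q : Submodule k A}
    (hI : IsIdeal k I) (hIq : colonH k ξ I ≤ q) :
    ∃ P, I ≤ P ∧ Maximal (fun J => IsIdeal k J ∧ colonH k ξ J ≤ q) P := by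
  refine zorn_le_nonempty₀ {J | IsIdeal k J ∧ colonH k ξ J ≤ q} (fun c hcS hc J hJ => ?_) I
    ⟨hI, hIq⟩
  refine ⟨sSup c, ⟨isIdeal_sSup fun K hK => (hcS hK).1, fun x hx => ?_⟩, fun _ => le_sSup⟩
  obtain ⟨K, hK, hxK⟩ := (mem_colonH_sSup_of_directedOn ⟨J, hJ⟩ hc.directedOn (hξ x)).1 hx
  exact (hcS hK).2 hxK

theorem IsHPrime.isPrimeIdeal_of_maximal {p P : Submodule k A} (hp : IsHPrime k ξ p)
    (hP : Maximal (fun I => IsIdeal k I ∧ colonH k ξ I ≤ p) P) : IsPrimeIdeal k P := by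
  obtain ⟨-, -, hp_ne_top, hp_prime⟩ := hp
  obtain ⟨hP_ideal, hPp⟩ := hP.prop
  refine ⟨hP_ideal, ?_, fun I J hI hJ hIJ => ?_⟩
  · rintro rfl
    exact hp_ne_top (top_le_iff.1 (colonH_top.ge.trans hPp))
  · have le_of_colonH_sup_le {K : Submodule k A} (hK : IsIdeal k K)
        (hKp : colonH k ξ (K ⊔ P) ≤ p) : K ≤ P :=
      le_sup_left.trans (hP.le_of_ge ⟨hK.sup hP_ideal, hKp⟩ le_sup_right)
    have hIP := hI.sup hP_ideal
    have hJP := hJ.sup hP_ideal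
    have hprod : idealProd k (colonH k ξ (I ⊔ P)) (colonH k ξ (J ⊔ P)) ≤ p := by
      rw [idealProd_eq_mul] at hIJ ⊢
      exact (colonH_mul_colonH_le.trans (colonH_mono (hP_ideal.sup_mul_sup_le hIJ))).trans hPp
    exact (hp_prime _ _ (isIdeal_colonH hIP) (hstable_colonH (hIP.mul_le_left ⊤))
      (isIdeal_colonH hJP) (hstable_colonH (hJP.mul_le_left ⊤)) hprod).imp
        (le_of_colonH_sup_le hI) (le_of_colonH_sup_le hJ)

theorem isHPrime_eq_colonH_prime_general
    (hξ : ∀ x, (LinearMap.range (ξ.act.flip x)).FG) {p : Submodule k A}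
    (hp : IsHPrime k ξ p) : ∃ P : Submodule k A, IsPrimeIdeal k P ∧ p = colonH k ξ P := by
  have ⟨hp_ideal, hp_stable, _⟩ := hp
  obtain ⟨P, hpP, hP⟩ := exists_le_maximal_isIdeal_colonH_le hξ hp_ideal inf_le_left
  exact ⟨P, hp.isPrimeIdeal_of_maximal hP, le_antisymm (hp_stable.le_colonH hpP) hP.prop.2⟩

end

/-- If `H` is finite dimensional, every `H`-prime ideal of `A` is of the form `(𝒫 : H)`
for some prime ideal `𝒫` of `A`. -/
theorem isHPrime_eq_colonH_prime [FiniteDimensional k H]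
    (ξ : PartialModuleAlgebra k H A) (p : Submodule k A) (hp : IsHPrime k ξ p) :
    ∃ P : Submodule k A, IsPrimeIdeal k P ∧ p = colonH k ξ P :=
  isHPrime_eq_colonH_prime_general (fun _ => Submodule.FG.of_finite) hp
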